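/- arXiv:2601.12843 — 2 statements merged into one kernel-verified Lean document; each statement's English description precedes it below -/
import Mathlib

section
/- For real k and z > 0, the function f(z,k) = z^{-1/2} K_{ik}(z²/2) satisfies the integral eigenvalue equation ∫_0^∞ G(z,w) f(w,k) dw = (π/cosh(πk)) f(z,k), where G(z,w) = 2 (zw)^{1/2} e^{-(z²+w²)/2}/(z²+w²). -/
open Real MeasureTheory

/-- The modified Bessel function of the second kind of purely imaginary order `ik`:
`K_{ik}(x) = ∫_0^∞ e^{-x cosh t} cos(k t) dt` (real-valued for real `k`, `x > 0`). -/
noncomputable def besselKim (k x : ℝ) : ℝ :=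
  ∫ t in Set.Ioi (0 : ℝ), Real.exp (-x * Real.cosh t) * Real.cos (k * t)

lemma kef_sq_le_sinh_sq (x : ℝ) : x ^ 2 ≤ Real.sinh x ^ 2 := by
  rcases le_total 0 x with h | h
  · have := Real.self_le_sinh_iff.2 h
    nlinarith
  · have := Real.sinh_le_self_iff.2 h
    nlinarith

lemma kef_cosh_lower (t : ℝ) : (1 + t ^ 2) / 8 ≤ Real.cosh (t / 2) := by
  have h1 : Real.cosh (t / 2) = 1 + 2 * Real.sinh (t / 4) ^ 2 := by
    have h := Real.cosh_two_mul (t / 4)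
    have h2 := Real.cosh_sq (t / 4)
    rw [show t / 2 = 2 * (t / 4) by ring, h, h2]; ring
  have := kef_sq_le_sinh_sq (t / 4)
  nlinarith

lemma kef_integrable_sech : Integrable (fun t : ℝ => (Real.cosh (t / 2))⁻¹) := by
  refine (integrable_inv_one_add_sq.const_mul 8).mono' ?_ ?_
  · exact (Continuous.inv₀ (by fun_prop) (fun t => (Real.cosh_pos _).ne')).aestronglyMeasurable
  · refine Filter.Eventually.of_forall fun t => ?_
    rw [Real.norm_of_nonneg (inv_nonneg.2 (Real.cosh_pos _).le)]
    have h := inv_anti₀ (by positivity) (kef_cosh_lower t)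
    rw [inv_div] at h
    simpa [div_eq_mul_inv] using h

lemma kef_integrable_cos_sech (k : ℝ) :
    Integrable (fun t : ℝ => Real.cos (k * t) * (Real.cosh (t / 2))⁻¹) := by
  refine kef_integrable_sech.mono' ?_ ?_
  · exact (Continuous.mul (by fun_prop) (Continuous.inv₀ (by fun_prop)
      (fun t => (Real.cosh_pos _).ne'))).aestronglyMeasurable
  · refine Filter.Eventually.of_forall fun t => ?_
    have hp := inv_nonneg.2 (Real.cosh_pos (t / 2)).le
    rw [norm_mul, Real.norm_of_nonneg hp]
    exact mul_le_of_le_one_left hp (Real.abs_cos_le_one _)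

lemma kef_sigmoid (t : ℝ) :
    Real.sigmoid t = Real.exp (t / 2 - Real.log (2 * Real.cosh (t / 2))) := by
  have hc := Real.cosh_pos (t / 2)
  rw [Real.exp_sub, Real.exp_log (by positivity), Real.sigmoid_def, Real.cosh_eq, inv_eq_one_div,
    div_eq_div_iff (by positivity) (by positivity)]
  have : Real.exp (t / 2) * Real.exp (-t) = Real.exp (-(t / 2)) := by
    rw [← Real.exp_add]; congr 1; ring
  linear_combination -this

lemma kef_pointwise (k t : ℝ) :
    |Real.sigmoid t * (1 - Real.sigmoid t)| •
      (((Real.sigmoid t : ℝ) : ℂ) ^ ((1 / 2 + k * Complex.I : ℂ) - 1) *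
        (1 - ((Real.sigmoid t : ℝ) : ℂ)) ^ ((1 / 2 - k * Complex.I : ℂ) - 1)) =
    Complex.exp (k * t * Complex.I) * ((2 * Real.cosh (t / 2))⁻¹ : ℝ) := by
  have hc := Real.cosh_pos (t / 2)
  have h1 : (1 : ℝ) - Real.sigmoid t = Real.exp (-(t / 2) - Real.log (2 * Real.cosh (t / 2))) := by
    rw [← Real.sigmoid_neg, kef_sigmoid]
    congr 1
    rw [neg_div, Real.cosh_neg]
  have h2 : (1 : ℂ) - ((Real.sigmoid t : ℝ) : ℂ) = ((1 - Real.sigmoid t : ℝ) : ℂ) := by push_cast; rfl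
  rw [h2, h1, kef_sigmoid, ← Real.exp_add, abs_of_pos (Real.exp_pos _)]
  have h3 : (2 * Real.cosh (t / 2))⁻¹ = Real.exp (- Real.log (2 * Real.cosh (t / 2))) := by
    rw [Real.exp_neg, Real.exp_log (by positivity)]
  rw [h3]
  generalize Real.log (2 * Real.cosh (t / 2)) = L
  have key : ∀ (x : ℝ) (s : ℂ), ((Real.exp x : ℝ) : ℂ) ^ s = Complex.exp (x * s) := by
    intro x s
    rw [Complex.cpow_def_of_ne_zero (by exact_mod_cast (Real.exp_pos x).ne'),
      ← Complex.ofReal_log (Real.exp_pos x).le, Real.log_exp]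
  rw [key, key, Complex.real_smul, Complex.ofReal_exp, Complex.ofReal_exp, ← Complex.exp_add,
    ← Complex.exp_add, ← Complex.exp_add]
  congr 1
  push_cast
  ring

lemma kef_fourier_complex (k : ℝ) :
    ∫ t : ℝ, Complex.exp (k * t * Complex.I) * ((2 * Real.cosh (t / 2))⁻¹ : ℝ) =
      ((Real.pi / Real.cosh (Real.pi * k) : ℝ) : ℂ) := by
  have hB := Complex.Gamma_mul_Gamma_eq_betaIntegral (s := 1 / 2 + k * Complex.I)
    (t := 1 / 2 - k * Complex.I) (by simp) (by simp)
  have hR := Complex.Gamma_mul_Gamma_one_sub (1 / 2 + k * Complex.I)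
  rw [show (1 : ℂ) - (1 / 2 + k * Complex.I) = 1 / 2 - k * Complex.I by ring, hB,
    show (1 / 2 + k * Complex.I + (1 / 2 - k * Complex.I) : ℂ) = 1 by ring, Complex.Gamma_one,
    one_mul] at hR
  have hs : Complex.sin (Real.pi * (1 / 2 + k * Complex.I)) =
      ((Real.cosh (Real.pi * k) : ℝ) : ℂ) := by
    rw [show (Real.pi * (1 / 2 + k * Complex.I) : ℂ) =
      (Real.pi * k : ℝ) * Complex.I + Real.pi / 2 by push_cast; ring,
      Complex.sin_add_pi_div_two, Complex.cos_mul_I, Complex.ofReal_cosh]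
  rw [hs, Complex.betaIntegral, intervalIntegral.integral_of_le zero_le_one,
    integral_Ioc_eq_integral_Ioo, ← Real.range_sigmoid, ← Set.image_univ,
    integral_image_eq_integral_abs_deriv_smul MeasurableSet.univ
      (fun x _ => (Real.hasDerivAt_sigmoid x).hasDerivWithinAt)
      Real.sigmoid_injective.injOn, Measure.restrict_univ] at hR
  simp_rw [kef_pointwise] at hR
  rw [hR]; push_cast; rfl

lemma kef_fourier_int (k : ℝ) :
    Integrable (fun t : ℝ => Complex.exp (k * t * Complex.I) * ((2 * Real.cosh (t / 2))⁻¹ : ℝ)) := by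
  refine kef_integrable_sech.mono' ?_ ?_
  · refine (Continuous.mul (by fun_prop) (Complex.continuous_ofReal.comp (Continuous.inv₀ (by fun_prop)
      (fun t => by have := Real.cosh_pos (t / 2); positivity)))).aestronglyMeasurable
  · refine Filter.Eventually.of_forall fun t => ?_
    have hp := (Real.cosh_pos (t / 2))
    rw [norm_mul, Complex.norm_real, Real.norm_of_nonneg (by positivity), ← Complex.ofReal_mul,
      Complex.norm_exp_ofReal_mul_I, one_mul]
    exact inv_anti₀ hp (by linarith)

lemma kef_exp_split (k t : ℝ) (r : ℝ) :
    Complex.exp (k * t * Complex.I) * (r : ℂ) =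
      ((Real.cos (k * t) * r : ℝ) : ℂ) + ((Real.sin (k * t) * r : ℝ) : ℂ) * Complex.I := by
  rw [Complex.exp_mul_I]; push_cast; ring

lemma kef_fourier_cos (k : ℝ) :
    ∫ t : ℝ, Real.cos (k * t) * (Real.cosh (t / 2))⁻¹ = 2 * Real.pi / Real.cosh (Real.pi * k) := by
  have h := congrArg Complex.re (kef_fourier_complex k)
  rw [Complex.ofReal_re, ← RCLike.re_eq_complex_re, ← integral_re (kef_fourier_int k)] at h
  have e : ∀ t : ℝ, Real.cos (k * t) * (Real.cosh (t / 2))⁻¹ =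
      2 * RCLike.re (Complex.exp (k * t * Complex.I) * ((2 * Real.cosh (t / 2))⁻¹ : ℝ)) := by
    intro t
    rw [kef_exp_split, RCLike.re_eq_complex_re, Complex.add_re, Complex.ofReal_re,
      Complex.re_ofReal_mul, Complex.I_re, mul_inv]
    ring
  simp_rw [e]
  rw [integral_const_mul, h]; ring

lemma kef_fourier_sin (k : ℝ) :
    ∫ t : ℝ, Real.sin (k * t) * (Real.cosh (t / 2))⁻¹ = 0 := by
  have h := integral_neg_eq_self (fun t : ℝ => Real.sin (k * t) * (Real.cosh (t / 2))⁻¹) volume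
  have e : ∀ t : ℝ, Real.sin (k * -t) * (Real.cosh (-t / 2))⁻¹ =
    -(Real.sin (k * t) * (Real.cosh (t / 2))⁻¹) := by
    intro t
    rw [mul_neg, Real.sin_neg, neg_div, Real.cosh_neg, neg_mul]
  simp_rw [e] at h
  rw [integral_neg] at h
  linarith

lemma kef_integrable_sin_sech (k : ℝ) :
    Integrable (fun t : ℝ => Real.sin (k * t) * (Real.cosh (t / 2))⁻¹) := by
  refine kef_integrable_sech.mono' ?_ ?_
  · exact (Continuous.mul (by fun_prop) (Continuous.inv₀ (by fun_prop)
      (fun t => (Real.cosh_pos _).ne'))).aestronglyMeasurable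
  · refine Filter.Eventually.of_forall fun t => ?_
    have hp := inv_nonneg.2 (Real.cosh_pos (t / 2)).le
    rw [norm_mul, Real.norm_of_nonneg hp]
    exact mul_le_of_le_one_left hp (Real.abs_sin_le_one _)

lemma kef_shift_eq (k s t : ℝ) :
    Real.cos (k * t) * (Real.cosh ((t - s) / 2))⁻¹ =
      Real.cos (k * s) * (Real.cos (k * (t - s)) * (Real.cosh ((t - s) / 2))⁻¹) -
      Real.sin (k * s) * (Real.sin (k * (t - s)) * (Real.cosh ((t - s) / 2))⁻¹) := by
  have : Real.cos (k * t) = Real.cos (k * s + k * (t - s)) := by congr 1; ring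
  rw [this, Real.cos_add]; ring

lemma kef_shift_int (k s : ℝ) :
    Integrable (fun t : ℝ => Real.cos (k * t) * (Real.cosh ((t - s) / 2))⁻¹) := by
  simp_rw [kef_shift_eq k s]
  exact (((kef_integrable_cos_sech k).comp_sub_right s).const_mul _).sub
    (((kef_integrable_sin_sech k).comp_sub_right s).const_mul _)

lemma kef_shift (k s : ℝ) :
    ∫ t : ℝ, Real.cos (k * t) * (Real.cosh ((t - s) / 2))⁻¹ =
      Real.cos (k * s) * (2 * Real.pi / Real.cosh (Real.pi * k)) := by
  simp_rw [kef_shift_eq k s]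
  rw [integral_sub (((kef_integrable_cos_sech k).comp_sub_right s).const_mul _)
    (((kef_integrable_sin_sech k).comp_sub_right s).const_mul _), integral_const_mul,
    integral_const_mul,
    integral_sub_right_eq_self (fun t : ℝ => Real.cos (k * t) * (Real.cosh (t / 2))⁻¹),
    integral_sub_right_eq_self (fun t : ℝ => Real.sin (k * t) * (Real.cosh (t / 2))⁻¹),
    kef_fourier_cos, kef_fourier_sin]
  ring

lemma kef_half (k s : ℝ) :
    ∫ t in Set.Ioi (0 : ℝ), Real.cos (k * t) * (Real.cosh (t / 2) /
        (Real.cosh (t / 2) ^ 2 + Real.sinh (s / 2) ^ 2)) =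
      Real.pi / Real.cosh (Real.pi * k) * Real.cos (k * s) / Real.cosh (s / 2) := by
  set F : ℝ → ℝ := fun t => Real.cos (k * t) * (Real.cosh ((t - s) / 2))⁻¹ with hF
  have hFi : Integrable F := kef_shift_int k s
  have hs := kef_shift k s
  rw [← intervalIntegral.integral_Iic_add_Ioi (b := 0) hFi.integrableOn hFi.integrableOn] at hs
  have hn := integral_comp_neg_Ioi 0 F
  rw [neg_zero] at hn
  rw [← hn, ← integral_add hFi.comp_neg.integrableOn hFi.integrableOn] at hs
  have hcs := Real.cosh_pos (s / 2)
  have e : ∀ t : ℝ, F (-t) + F t = (2 * Real.cosh (s / 2)) * (Real.cos (k * t) * (Real.cosh (t / 2) /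
        (Real.cosh (t / 2) ^ 2 + Real.sinh (s / 2) ^ 2))) := by
    intro t
    simp only [hF]
    rw [mul_neg, Real.cos_neg, show (-t - s) / 2 = -(t / 2 + s / 2) by ring, Real.cosh_neg,
      show (t - s) / 2 = t / 2 - s / 2 by ring]
    have p1 := Real.cosh_pos (t / 2 + s / 2)
    have p2 := Real.cosh_pos (t / 2 - s / 2)
    have p3 := Real.cosh_pos (t / 2)
    have hd : Real.cosh (t / 2) ^ 2 + Real.sinh (s / 2) ^ 2 =
        Real.cosh (t / 2 + s / 2) * Real.cosh (t / 2 - s / 2) := by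
      rw [Real.cosh_add, Real.cosh_sub]
      have a1 := Real.cosh_sq (t / 2)
      have a2 := Real.cosh_sq (s / 2)
      linear_combination (-Real.cosh (t / 2) ^ 2) * a2 - Real.sinh (s / 2) ^ 2 * a1
    have hsum : Real.cosh (t / 2 + s / 2) + Real.cosh (t / 2 - s / 2) =
        2 * Real.cosh (t / 2) * Real.cosh (s / 2) := by
      rw [Real.cosh_add, Real.cosh_sub]; ring
    rw [hd]
    generalize Real.cosh (t / 2 + s / 2) = A at *
    generalize Real.cosh (t / 2 - s / 2) = B at *
    field_simp
    linear_combination Real.cos (k * t) * hsum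
  simp_rw [e] at hs
  rw [integral_const_mul] at hs
  rw [eq_div_iff hcs.ne']
  linear_combination hs / 2

lemma kef_cosh_eq (t : ℝ) : Real.cosh t = 2 * Real.cosh (t / 2) ^ 2 - 1 := by
  have h := Real.cosh_two_mul (t / 2)
  have h2 := Real.cosh_sq (t / 2)
  rw [show 2 * (t / 2) = t by ring] at h
  linarith

lemma kef_fubini_one (k z : ℝ) (hz : 0 < z) :
    Integrable (Function.uncurry fun w t : ℝ =>
      Real.exp (-(Real.cosh (t / 2) ^ 2) * w ^ 2) / (z ^ 2 + w ^ 2) * Real.cos (k * t))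
      ((volume.restrict (Set.Ioi (0 : ℝ))).prod (volume.restrict (Set.Ioi (0 : ℝ)))) := by
  have hcont : Continuous (Function.uncurry fun w t : ℝ =>
      Real.exp (-(Real.cosh (t / 2) ^ 2) * w ^ 2) / (z ^ 2 + w ^ 2) * Real.cos (k * t)) := by
    unfold Function.uncurry
    refine Continuous.mul (Continuous.div (by fun_prop) (by fun_prop) ?_) (by fun_prop)
    intro x; positivity
  have hm := hcont.aestronglyMeasurable
    (μ := (volume.restrict (Set.Ioi (0 : ℝ))).prod (volume.restrict (Set.Ioi (0 : ℝ))))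
  have hb : ∀ w t : ℝ, ‖Real.exp (-(Real.cosh (t / 2) ^ 2) * w ^ 2) / (z ^ 2 + w ^ 2) *
      Real.cos (k * t)‖ ≤ (z ^ 2)⁻¹ * Real.exp (-(Real.cosh (t / 2) ^ 2) * w ^ 2) := by
    intro w t
    rw [norm_mul, Real.norm_of_nonneg (by positivity)]
    refine (mul_le_of_le_one_right (by positivity) (Real.abs_cos_le_one _)).trans ?_
    rw [div_eq_mul_inv, mul_comm]
    gcongr
    nlinarith [sq_nonneg w]
  have hg : ∀ t : ℝ, Integrable (fun w : ℝ => (z ^ 2)⁻¹ *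
      Real.exp (-(Real.cosh (t / 2) ^ 2) * w ^ 2)) (volume.restrict (Set.Ioi (0 : ℝ))) := by
    intro t
    have := Real.cosh_pos (t / 2)
    exact ((integrable_exp_neg_mul_sq (by positivity)).const_mul _).integrableOn
  have hi : ∀ t : ℝ, Integrable (fun w : ℝ =>
      Real.exp (-(Real.cosh (t / 2) ^ 2) * w ^ 2) / (z ^ 2 + w ^ 2) * Real.cos (k * t))
      (volume.restrict (Set.Ioi (0 : ℝ))) := by
    intro t
    refine (hg t).mono' ?_ (Filter.Eventually.of_forall fun w => hb w t)
    exact (hcont.comp (Continuous.prodMk_left t)).aestronglyMeasurable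
  rw [integrable_prod_iff' hm]
  refine ⟨Filter.Eventually.of_forall hi, ?_⟩
  have hd : Integrable (fun t : ℝ => ((z ^ 2)⁻¹ * (√π / 2)) * (Real.cosh (t / 2))⁻¹)
      (volume.restrict (Set.Ioi (0 : ℝ))) := (kef_integrable_sech.const_mul _).integrableOn
  refine hd.mono' hm.norm.prod_swap.integral_prod_right' (Filter.Eventually.of_forall fun t => ?_)
  have hc := Real.cosh_pos (t / 2)
  rw [Real.norm_of_nonneg (integral_nonneg fun _ => norm_nonneg _)]
  calc _ ≤ ∫ w in Set.Ioi (0 : ℝ), (z ^ 2)⁻¹ * Real.exp (-(Real.cosh (t / 2) ^ 2) * w ^ 2) :=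
        integral_mono (hi t).norm (hg t) (fun w => hb w t)
    _ = _ := by
        rw [integral_const_mul, integral_gaussian_Ioi, Real.sqrt_div' _ (by positivity),
          Real.sqrt_sq hc.le]
        ring

lemma kef_fubini_two (k z : ℝ) (hz : 0 < z) :
    Integrable (Function.uncurry fun t u : ℝ =>
      Real.exp (-(z ^ 2) * u ^ 2) * (Real.cos (k * t) * (Real.cosh (t / 2) /
        (Real.cosh (t / 2) ^ 2 + u ^ 2))))
      ((volume.restrict (Set.Ioi (0 : ℝ))).prod (volume.restrict (Set.Ioi (0 : ℝ)))) := by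
  have h1 : Integrable (fun t : ℝ => (Real.cosh (t / 2))⁻¹) (volume.restrict (Set.Ioi (0 : ℝ))) :=
    kef_integrable_sech.integrableOn
  have h2 : Integrable (fun u : ℝ => Real.exp (-(z ^ 2) * u ^ 2))
      (volume.restrict (Set.Ioi (0 : ℝ))) :=
    (integrable_exp_neg_mul_sq (by positivity)).integrableOn
  refine (h1.mul_prod h2).mono' ?_ (Filter.Eventually.of_forall ?_)
  · refine Continuous.aestronglyMeasurable ?_
    unfold Function.uncurry
    refine Continuous.mul (by fun_prop) (Continuous.mul (by fun_prop)
      (Continuous.div (by fun_prop) (by fun_prop) ?_))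
    intro x
    have := Real.cosh_pos (x.1 / 2)
    positivity
  · rintro ⟨t, u⟩
    have hc := Real.cosh_pos (t / 2)
    simp only [Function.uncurry]
    rw [norm_mul, norm_mul, Real.norm_of_nonneg (Real.exp_pos _).le,
      Real.norm_of_nonneg (by positivity : 0 ≤ Real.cosh (t / 2) / (Real.cosh (t / 2) ^ 2 + u ^ 2)),
      mul_comm]
    gcongr
    refine (mul_le_of_le_one_left (by positivity) (Real.abs_cos_le_one _)).trans ?_
    rw [div_le_iff₀ (by positivity), inv_mul_eq_div, le_div_iff₀ hc]
    nlinarith [sq_nonneg u]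

lemma kef_scale (z c : ℝ) (hz : 0 < z) (hc : 0 < c) :
    ∫ w in Set.Ioi (0 : ℝ), Real.exp (-(c ^ 2) * w ^ 2) / (z ^ 2 + w ^ 2) =
      z⁻¹ * ∫ u in Set.Ioi (0 : ℝ), Real.exp (-(z ^ 2) * u ^ 2) * (c / (c ^ 2 + u ^ 2)) := by
  have h := integral_comp_mul_left_Ioi
    (fun w : ℝ => Real.exp (-(c ^ 2) * w ^ 2) / (z ^ 2 + w ^ 2)) 0 (b := z / c) (by positivity)
  rw [mul_zero, smul_eq_mul] at h
  have h' : ∫ w in Set.Ioi (0 : ℝ), Real.exp (-(c ^ 2) * w ^ 2) / (z ^ 2 + w ^ 2) = z / c *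
      ∫ u in Set.Ioi (0 : ℝ), Real.exp (-(c ^ 2) * (z / c * u) ^ 2) / (z ^ 2 + (z / c * u) ^ 2) := by
    rw [h]; field_simp
  rw [h', ← integral_const_mul, ← integral_const_mul]
  congr 1
  ext u
  have e : -(c ^ 2) * (z / c * u) ^ 2 = -(z ^ 2) * u ^ 2 := by field_simp
  have e2 : z ^ 2 + (z / c * u) ^ 2 = z ^ 2 / c ^ 2 * (c ^ 2 + u ^ 2) := by field_simp
  rw [e, e2]
  have : 0 < c ^ 2 + u ^ 2 := by positivity
  field_simp

lemma kef_sinh_subst (g : ℝ → ℝ) :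
    ∫ u in Set.Ioi (0 : ℝ), g u =
      ∫ s in Set.Ioi (0 : ℝ), (Real.cosh (s / 2) / 2) * g (Real.sinh (s / 2)) := by
  have him : (fun s : ℝ => Real.sinh (s / 2)) '' Set.Ioi 0 = Set.Ioi 0 := by
    ext y
    simp only [Set.mem_image, Set.mem_Ioi]
    constructor
    · rintro ⟨x, hx, rfl⟩
      exact Real.sinh_pos_iff.2 (by positivity)
    · intro hy
      refine ⟨2 * Real.arsinh y, ?_, ?_⟩
      · have := Real.arsinh_pos_iff.2 hy
        positivity
      · rw [mul_div_cancel_left₀ _ two_ne_zero, Real.sinh_arsinh]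
  have hd : ∀ s : ℝ, HasDerivAt (fun s : ℝ => Real.sinh (s / 2)) (Real.cosh (s / 2) / 2) s := by
    intro s
    have := ((hasDerivAt_id s).div_const 2).sinh
    simpa [div_eq_mul_inv] using this
  have hinj : Function.Injective (fun s : ℝ => Real.sinh (s / 2)) := by
    intro a b hab
    have := Real.sinh_injective hab
    linarith
  have h := integral_image_eq_integral_abs_deriv_smul (measurableSet_Ioi (a := (0 : ℝ)))
    (fun s _ => (hd s).hasDerivWithinAt) hinj.injOn g
  rw [him] at h
  rw [h]
  congr 1
  ext s
  have := Real.cosh_pos (s / 2)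
  rw [abs_of_pos (by positivity), smul_eq_mul]

lemma kef_core (k z : ℝ) (hz : 0 < z) :
    ∫ w in Set.Ioi (0 : ℝ), ∫ t in Set.Ioi (0 : ℝ),
      Real.exp (-(Real.cosh (t / 2) ^ 2) * w ^ 2) / (z ^ 2 + w ^ 2) * Real.cos (k * t) =
    z⁻¹ * (Real.pi / Real.cosh (Real.pi * k)) / 2 *
      ∫ s in Set.Ioi (0 : ℝ), Real.exp (-(z ^ 2) * Real.sinh (s / 2) ^ 2) * Real.cos (k * s) := by
  rw [integral_integral_swap (kef_fubini_one k z hz)]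
  have e1 : ∀ t : ℝ, ∫ w in Set.Ioi (0 : ℝ),
      Real.exp (-(Real.cosh (t / 2) ^ 2) * w ^ 2) / (z ^ 2 + w ^ 2) * Real.cos (k * t) =
      z⁻¹ * ∫ u in Set.Ioi (0 : ℝ), Real.exp (-(z ^ 2) * u ^ 2) * (Real.cos (k * t) *
        (Real.cosh (t / 2) / (Real.cosh (t / 2) ^ 2 + u ^ 2))) := by
    intro t
    rw [integral_mul_const, kef_scale z _ hz (Real.cosh_pos _), mul_assoc, ← integral_mul_const]
    congr 2
    ext u
    ring
  simp_rw [e1]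
  rw [integral_const_mul, integral_integral_swap (kef_fubini_two k z hz), kef_sinh_subst]
  simp_rw [integral_const_mul, kef_half]
  rw [← integral_const_mul, ← integral_const_mul]
  refine integral_congr_ae (Filter.Eventually.of_forall fun s => ?_)
  have := Real.cosh_pos (s / 2)
  simp only
  field_simp

theorem kernel_eigenfunction (k z : ℝ) (hz : 0 < z) :
    (∫ w in Set.Ioi (0 : ℝ),
        (2 * (z * w) ^ ((1 : ℝ) / 2) * Real.exp (-(z ^ 2 + w ^ 2) / 2) / (z ^ 2 + w ^ 2)) *
          (w ^ (-(1 : ℝ) / 2) * besselKim k (w ^ 2 / 2)))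
      = Real.pi / Real.cosh (Real.pi * k) *
          (z ^ (-(1 : ℝ) / 2) * besselKim k (z ^ 2 / 2)) := by
  have e : ∀ w ∈ Set.Ioi (0 : ℝ),
      (2 * (z * w) ^ ((1 : ℝ) / 2) * Real.exp (-(z ^ 2 + w ^ 2) / 2) / (z ^ 2 + w ^ 2)) *
          (w ^ (-(1 : ℝ) / 2) * besselKim k (w ^ 2 / 2)) =
      (2 * z ^ ((1 : ℝ) / 2) * Real.exp (-(z ^ 2) / 2)) * ∫ t in Set.Ioi (0 : ℝ),
        Real.exp (-(Real.cosh (t / 2) ^ 2) * w ^ 2) / (z ^ 2 + w ^ 2) * Real.cos (k * t) := by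
    intro w hw
    have hw : 0 < w := hw
    have hp : w ^ ((1 : ℝ) / 2) * w ^ (-(1 : ℝ) / 2) = 1 := by
      rw [← Real.rpow_add hw]; norm_num
    have hK : ∫ t in Set.Ioi (0 : ℝ),
        Real.exp (-(Real.cosh (t / 2) ^ 2) * w ^ 2) / (z ^ 2 + w ^ 2) * Real.cos (k * t) =
        Real.exp (-(w ^ 2) / 2) / (z ^ 2 + w ^ 2) * besselKim k (w ^ 2 / 2) := by
      rw [besselKim, ← integral_const_mul]
      congr 1
      ext t
      have : -(Real.cosh (t / 2) ^ 2) * w ^ 2 = -(w ^ 2) / 2 + -(w ^ 2 / 2) * Real.cosh t := by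
        rw [kef_cosh_eq t]; ring
      rw [this, Real.exp_add]; ring
    have hE : Real.exp (-(z ^ 2 + w ^ 2) / 2) =
        Real.exp (-(z ^ 2) / 2) * Real.exp (-(w ^ 2) / 2) := by
      rw [← Real.exp_add]; congr 1; ring
    rw [hK, hE, Real.mul_rpow hz.le hw.le]
    linear_combination (2 * z ^ ((1 : ℝ) / 2) * Real.exp (-(z ^ 2) / 2) *
      Real.exp (-(w ^ 2) / 2) / (z ^ 2 + w ^ 2) * besselKim k (w ^ 2 / 2)) * hp
  rw [setIntegral_congr_fun measurableSet_Ioi e, integral_const_mul, kef_core k z hz]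
  have hK : besselKim k (z ^ 2 / 2) = Real.exp (-(z ^ 2) / 2) *
      ∫ s in Set.Ioi (0 : ℝ), Real.exp (-(z ^ 2) * Real.sinh (s / 2) ^ 2) * Real.cos (k * s) := by
    rw [besselKim, ← integral_const_mul]
    congr 1
    ext s
    have : -(z ^ 2 / 2) * Real.cosh s = -(z ^ 2) / 2 + -(z ^ 2) * Real.sinh (s / 2) ^ 2 := by
      rw [kef_cosh_eq s, Real.cosh_sq]; ring
    rw [this, Real.exp_add]; ring
  have hp : z ^ ((1 : ℝ) / 2) * z⁻¹ = z ^ (-(1 : ℝ) / 2) := by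
    rw [← Real.rpow_neg_one, ← Real.rpow_add hz]; norm_num
  rw [hK, ← hp]
  ring
end

section
/- For real k and z > 0, the Mellin–Barnes representation z^{-1/2} K_{ik}(z²/2) = π^{-3/2} e^{-z²/2} z^{2ik - 1/2} (cosh(πk)/(2i)) ∫_{-i∞-0}^{+i∞-0} Γ(1/2 + ik + t) Γ(-t) Γ(-2ik - t) z^{2t} dt holds, where the contour runs to the left of the poles of Γ(-t) and Γ(-2ik - t). -/
open Complex Real MeasureTheory

lemma aux_exp_image : (fun t : ℝ => Real.exp (-t)) '' Set.Ioi 0 = Set.Ioo 0 1 := by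
  ext x
  constructor
  · rintro ⟨t, ht, rfl⟩
    have : 0 < t := ht
    exact ⟨Real.exp_pos _, by simpa using this⟩
  · rintro ⟨h0, h1⟩
    exact ⟨-Real.log x, by simpa using Real.log_neg h0 h1, by simp [Real.exp_log h0]⟩

lemma aux_beta (u v : ℂ) (hu : 0 < u.re) (hv : 0 < v.re) :
    IntegrableOn (fun t : ℝ => Complex.exp (-t * u) * ((1 - Real.exp (-t) : ℝ) : ℂ) ^ (v - 1))
      (Set.Ioi 0) ∧
    ∫ t in Set.Ioi (0:ℝ), Complex.exp (-t * u) * ((1 - Real.exp (-t) : ℝ) : ℂ) ^ (v - 1)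
      = Complex.Gamma u * Complex.Gamma v / Complex.Gamma (u + v) := by
  have hd : ∀ x ∈ Set.Ioi (0:ℝ), HasDerivWithinAt (fun t : ℝ => Real.exp (-t))
      (-Real.exp (-x)) (Set.Ioi 0) x := by
    intro x _
    have := ((hasDerivAt_id x).neg.exp).hasDerivWithinAt (s := Set.Ioi 0)
    simpa using this
  have hi : Set.InjOn (fun t : ℝ => Real.exp (-t)) (Set.Ioi 0) := by
    intro a _ b _ h
    simpa using h
  let g : ℝ → ℂ := fun x => (x : ℂ) ^ (u - 1) * (1 - (x : ℂ)) ^ (v - 1)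
  have hg : ∀ t ∈ Set.Ioi (0:ℝ), |-Real.exp (-t)| • g (Real.exp (-t)) =
      Complex.exp (-t * u) * ((1 - Real.exp (-t) : ℝ) : ℂ) ^ (v - 1) := by
    intro t _
    have h0 : ((Real.exp (-t) : ℝ) : ℂ) ≠ 0 := by exact_mod_cast (Real.exp_pos _).ne'
    rw [abs_neg, abs_of_pos (Real.exp_pos _)]
    simp only [g, real_smul, ← mul_assoc]
    congr 1
    · rw [cpow_sub _ _ h0, cpow_one, mul_div_cancel₀ _ h0, cpow_def_of_ne_zero h0,
        ← Complex.ofReal_log (Real.exp_pos _).le, Real.log_exp]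
      push_cast; rfl
    · push_cast; rfl
  have hI : IntegrableOn g (Set.Ioo 0 1) := by
    have := betaIntegral_convergent hu hv
    rw [intervalIntegrable_iff_integrableOn_Ioo_of_le zero_le_one] at this
    exact this
  constructor
  · rw [← aux_exp_image, integrableOn_image_iff_integrableOn_abs_deriv_smul measurableSet_Ioi hd hi]
      at hI
    exact hI.congr_fun hg measurableSet_Ioi
  · rw [← setIntegral_congr_fun measurableSet_Ioi hg,
      ← integral_image_eq_integral_abs_deriv_smul measurableSet_Ioi hd hi, aux_exp_image,
      ← integral_Ioc_eq_integral_Ioo, ← intervalIntegral.integral_of_le zero_le_one]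
    rw [Gamma_mul_Gamma_eq_betaIntegral hu hv, mul_div_cancel_left₀]
    · rfl
    · exact Gamma_ne_zero_of_re_pos (by simp; positivity)

lemma aux_sinh_cpow (w : ℂ) (t : ℝ) (ht : 0 < t) :
    ((Real.sinh (t / 2) ^ 2 : ℝ) : ℂ) ^ (-w) =
      (2:ℂ) ^ (2 * w) * (Complex.exp (-t * w) * ((1 - Real.exp (-t) : ℝ) : ℂ) ^ (1 - 2 * w - 1)) := by
  have h1 : 0 < 1 - Real.exp (-t) := by simpa using ht
  have e : Real.sinh (t / 2) ^ 2 = Real.exp (t + 2 * Real.log (1 - Real.exp (-t)) - 2 * Real.log 2) := by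
    rw [Real.exp_sub, Real.exp_add, two_mul (Real.log _), two_mul (Real.log 2), Real.exp_add,
      Real.exp_add, Real.exp_log h1, Real.exp_log two_pos, Real.sinh_eq]
    have : Real.exp t = Real.exp (t/2) * Real.exp (t/2) := by rw [← Real.exp_add]; ring_nf
    have h2 : Real.exp (-t) = Real.exp (-(t/2)) * Real.exp (-(t/2)) := by rw [← Real.exp_add]; ring_nf
    have h3 : Real.exp (t/2) * Real.exp (-(t/2)) = 1 := by rw [← Real.exp_add]; simp
    rw [this, h2]
    generalize Real.exp (t/2) = a at *
    generalize Real.exp (-(t/2)) = b at *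
    have : a * a * ((1 - b*b)*(1-b*b)) = (a - b)^2 := by
      linear_combination (a * b * b * b + b * b - 2 * a * b) * h3
    rw [this]; ring
  have p0 : ((Real.sinh (t / 2) ^ 2 : ℝ) : ℂ) ≠ 0 := by
    rw [e]; exact_mod_cast (Real.exp_pos _).ne'
  have p1 : ((1 - Real.exp (-t) : ℝ) : ℂ) ≠ 0 := by exact_mod_cast h1.ne'
  rw [cpow_def_of_ne_zero p0, cpow_def_of_ne_zero p1, cpow_def_of_ne_zero two_ne_zero,
    ← Complex.exp_add, ← Complex.exp_add, ← Complex.ofReal_log (sq_nonneg _),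
    ← Complex.ofReal_log h1.le, e, Real.log_exp]
  congr 1
  have : Complex.log 2 = (Real.log 2 : ℝ) := by simp
  rw [this]; push_cast; ring

lemma aux_gamma_identity (w : ℂ) (k : ℝ) (h0 : 0 < w.re) (h1 : w.re < 1 / 2) :
    Complex.Gamma w * ((2:ℂ) ^ (2 * w) * ((1/2) *
      (Complex.Gamma (w + I * k) * Complex.Gamma (1 - 2 * w) / Complex.Gamma (w + I * k + (1 - 2 * w))
      + Complex.Gamma (w - I * k) * Complex.Gamma (1 - 2 * w) / Complex.Gamma (w - I * k + (1 - 2 * w)))))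
    = (Real.cosh (Real.pi * k) : ℂ) / (√π : ℝ) *
      (Complex.Gamma (w + I * k) * Complex.Gamma (w - I * k) * Complex.Gamma (1 / 2 - w)) := by
  have hpi : (π : ℂ) ≠ 0 := by exact_mod_cast Real.pi_ne_zero
  have hs : ((√π : ℝ) : ℂ) ≠ 0 := by exact_mod_cast (Real.sqrt_pos.2 Real.pi_pos).ne'
  have key : ∀ s : ℂ, 0 < s.re → s.re < 1 → (Complex.Gamma (1 - s))⁻¹ =
      Complex.Gamma s * Complex.sin (π * s) / π := by
    intro s hs0 hs1
    have a := Complex.Gamma_mul_Gamma_one_sub s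
    have b : Complex.Gamma s ≠ 0 := Gamma_ne_zero_of_re_pos hs0
    have c : Complex.Gamma (1 - s) ≠ 0 := Gamma_ne_zero_of_re_pos (by simpa using hs1)
    have d : Complex.sin (π * s) ≠ 0 := by
      intro h
      rw [h, div_zero] at a
      exact mul_ne_zero b c a
    rw [eq_div_iff d] at a
    rw [eq_div_iff hpi, inv_mul_eq_iff_eq_mul₀ c]
    linear_combination -a
  have e1 : w + I * k + (1 - 2 * w) = 1 - (w - I * k) := by ring
  have e2 : w - I * k + (1 - 2 * w) = 1 - (w + I * k) := by ring
  have k1 := key (w - I * k) (by simpa using h0) (by simp; linarith)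
  have k2 := key (w + I * k) (by simpa using h0) (by simp; linarith)
  have k3 := key w h0 (by linarith)
  have c3 : Complex.Gamma (1 - w) ≠ 0 := Gamma_ne_zero_of_re_pos (by simp; linarith)
  have dup := Complex.Gamma_mul_Gamma_add_half (1 / 2 - w)
  rw [show (1 / 2 - w + 1 / 2 : ℂ) = 1 - w by ring, show (2 * (1 / 2 - w) : ℂ) = 1 - 2 * w by ring,
    show (1 - (1 - 2 * w) : ℂ) = 2 * w by ring] at dup
  have hsin : Complex.sin (π * (w - I * k)) + Complex.sin (π * (w + I * k)) =
      2 * Complex.sin (π * w) * (Real.cosh (π * k) : ℂ) := by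
    have : (Real.cosh (π * k) : ℂ) = Complex.cos (π * k * I) := by
      rw [Complex.cos_mul_I]; push_cast; rfl
    rw [this, mul_sub, mul_add, show (π * (I * k) : ℂ) = π * k * I by ring, Complex.sin_sub,
      Complex.sin_add]
    ring
  have dup' : Complex.Gamma (1 / 2 - w) =
      Complex.Gamma (1 - 2 * w) * 2 ^ (2 * w) * (√π : ℝ) * (Complex.Gamma (1 - w))⁻¹ := by
    rw [← dup]; field_simp
  rw [e1, e2, div_eq_mul_inv (_ * _) (Complex.Gamma (1 - (w - I * k))),
    div_eq_mul_inv (_ * _) (Complex.Gamma (1 - (w + I * k))), k1, k2, dup', k3]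
  have : ∀ a b c d e f s1 s2 s3 ch p q : ℂ, q ≠ 0 → s1 + s2 = 2 * s3 * ch →
      a * (b * (1 / 2 * (c * d * (e * s1 / p) + e * d * (c * s2 / p)))) =
      ch / q * (c * e * (d * b * q * (a * s3 / p))) := by
    intro a b c d e f s1 s2 s3 ch p q hq h
    have : s1 = 2 * s3 * ch - s2 := by linear_combination h
    rw [this]
    field_simp
    ring
  exact this _ _ _ _ _ 0 _ _ _ _ _ _ hs hsin

/-- `e^{x/2} K_{ik}(x/2)` as an integral. -/
noncomputable def auxg (k : ℝ) (x : ℝ) : ℂ :=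
  ∫ t in Set.Ioi (0:ℝ), ((Real.exp (-(Real.sinh (t / 2) ^ 2 * x)) * Real.cos (k * t) : ℝ) : ℂ)

lemma auxg_eq (k x : ℝ) : auxg k x = ((Real.exp (x / 2) * besselKim k (x / 2) : ℝ) : ℂ) := by
  unfold auxg besselKim
  rw [← integral_const_mul]
  refine integral_ofReal.trans ?_
  congr 2
  ext t
  rw [← mul_assoc, ← Real.exp_add]
  congr 2
  have h := Real.cosh_two_mul (t / 2)
  rw [Real.cosh_sq, mul_div_cancel₀ t two_ne_zero] at h
  rw [h]; ring

lemma aux_le_sinh_sq (t : ℝ) (ht : 0 < t) : t ^ 2 / 4 ≤ Real.sinh (t / 2) ^ 2 := by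
  have : t / 2 ≤ Real.sinh (t / 2) := Real.self_le_sinh_iff.2 (by positivity)
  calc t ^ 2 / 4 = (t / 2) ^ 2 := by ring
    _ ≤ _ := by gcongr

lemma auxg_continuousAt (k x : ℝ) (hx : 0 < x) : ContinuousAt (auxg k) x := by
  unfold auxg
  refine continuousAt_of_dominated (bound := fun t => Real.exp (-(x / 8) * t ^ 2)) ?_ ?_ ?_ ?_
  · refine Filter.Eventually.of_forall fun y => ?_
    exact Continuous.aestronglyMeasurable (by fun_prop)
  · filter_upwards [eventually_gt_nhds (show x / 2 < x by linarith)] with y hy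
    refine (ae_restrict_iff' measurableSet_Ioi).2 (Filter.Eventually.of_forall fun t ht => ?_)
    have h := aux_le_sinh_sq t ht
    rw [Complex.norm_real, norm_mul, Real.norm_of_nonneg (Real.exp_pos _).le]
    refine (mul_le_of_le_one_right (Real.exp_pos _).le (Real.abs_cos_le_one _)).trans ?_
    apply Real.exp_le_exp.2
    have : t ^ 2 / 4 * (x / 2) ≤ Real.sinh (t / 2) ^ 2 * y := by
      apply mul_le_mul h hy.le (by positivity) (by positivity)
    linarith
  · exact (integrable_exp_neg_mul_sq (by positivity)).integrableOn
  · refine Filter.Eventually.of_forall fun t => ?_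
    fun_prop

lemma aux_fubini (k : ℝ) (w : ℂ) (h0 : 0 < w.re) (h1 : w.re < 1 / 2) :
    Integrable (Function.uncurry fun x t : ℝ => (x : ℂ) ^ (w - 1) *
      ((Real.exp (-(Real.sinh (t / 2) ^ 2 * x)) * Real.cos (k * t) : ℝ) : ℂ))
      ((volume.restrict (Set.Ioi (0:ℝ))).prod (volume.restrict (Set.Ioi (0:ℝ)))) := by
  have hb : ∀ t ∈ Set.Ioi (0:ℝ), IntegrableOn (fun x : ℝ => x ^ (w.re - 1) *
      Real.exp (-(Real.sinh (t / 2) ^ 2 * x))) (Set.Ioi 0) ∧ ∫ x in Set.Ioi (0:ℝ), x ^ (w.re - 1) *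
      Real.exp (-(Real.sinh (t / 2) ^ 2 * x)) =
      (1 / (Real.sinh (t / 2) ^ 2)) ^ w.re * Real.Gamma w.re := by
    intro t ht
    have hp : 0 < Real.sinh (t / 2) ^ 2 := by
      have : 0 < Real.sinh (t / 2) := Real.sinh_pos_iff.2 (half_pos ht)
      positivity
    refine ⟨?_, Real.integral_rpow_mul_exp_neg_mul_Ioi h0 hp⟩
    have := integrableOn_rpow_mul_exp_neg_mul_rpow (s := w.re - 1) (p := 1) (by linarith) one_pos hp
    simpa using this
  have hm : AEStronglyMeasurable (Function.uncurry fun x t : ℝ => (x : ℂ) ^ (w - 1) *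
      ((Real.exp (-(Real.sinh (t / 2) ^ 2 * x)) * Real.cos (k * t) : ℝ) : ℂ))
      ((volume.restrict (Set.Ioi (0:ℝ))).prod (volume.restrict (Set.Ioi (0:ℝ)))) := by
    apply Measurable.aestronglyMeasurable
    unfold Function.uncurry
    apply Measurable.mul
    · fun_prop
    · exact Continuous.measurable (by fun_prop)
  have hn : ∀ t : ℝ, ∀ x ∈ Set.Ioi (0:ℝ), ‖(x : ℂ) ^ (w - 1) *
      ((Real.exp (-(Real.sinh (t / 2) ^ 2 * x)) * Real.cos (k * t) : ℝ) : ℂ)‖ =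
      x ^ (w.re - 1) * Real.exp (-(Real.sinh (t / 2) ^ 2 * x)) * |Real.cos (k * t)| := by
    intro t x hx
    rw [norm_mul, norm_cpow_eq_rpow_re_of_pos hx, Complex.norm_real, norm_mul,
      Real.norm_of_nonneg (Real.exp_pos _).le, Real.norm_eq_abs, sub_re, one_re, mul_assoc]
  rw [integrable_prod_iff' hm]
  constructor
  · refine (ae_restrict_iff' measurableSet_Ioi).2 (Filter.Eventually.of_forall fun t ht => ?_)
    have h := ((hb t ht).1).mul_const |Real.cos (k * t)|
    refine h.mono' ?_ ?_
    · apply Measurable.aestronglyMeasurable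
      simp only [Function.uncurry]
      apply Measurable.mul
      · fun_prop
      · exact Continuous.measurable (by fun_prop)
    · refine (ae_restrict_iff' measurableSet_Ioi).2 (Filter.Eventually.of_forall fun x hx => ?_)
      exact (hn t x hx).le
  · have A := (aux_beta w.re (1 - 2 * w.re : ℂ) (by simpa using h0) (by simp; linarith)).1
    have B := ((A.const_mul ((2:ℂ) ^ (2 * (w.re : ℂ)))).norm.mul_const (Real.Gamma w.re))
    refine B.mono' hm.norm.prod_swap.integral_prod_right' ?_
    refine (ae_restrict_iff' measurableSet_Ioi).2 (Filter.Eventually.of_forall fun t ht => ?_)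
    simp only [Function.uncurry]
    rw [setIntegral_congr_fun measurableSet_Ioi (hn t), integral_mul_const, (hb t ht).2,
      ← aux_sinh_cpow _ _ ht]
    have hp : 0 < Real.sinh (t / 2) ^ 2 := by
      have : 0 < Real.sinh (t / 2) := Real.sinh_pos_iff.2 (half_pos ht)
      positivity
    rw [norm_cpow_eq_rpow_re_of_pos hp, neg_re, ofReal_re, one_div, Real.inv_rpow hp.le,
      ← Real.rpow_neg hp.le, norm_mul, norm_mul, Real.norm_of_nonneg (Real.rpow_nonneg hp.le _),
      Real.norm_of_nonneg (Real.Gamma_pos_of_pos h0).le, Real.norm_eq_abs, abs_abs]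
    exact mul_le_of_le_one_right (mul_nonneg (Real.rpow_nonneg hp.le _)
      (Real.Gamma_pos_of_pos h0).le) (Real.abs_cos_le_one _)

lemma auxg_mellinConvergent (k : ℝ) (w : ℂ) (h0 : 0 < w.re) (h1 : w.re < 1 / 2) :
    MellinConvergent (auxg k) w := by
  have := (aux_fubini k w h0 h1).integral_prod_left
  unfold MellinConvergent auxg
  simp only [smul_eq_mul, ← integral_const_mul]
  exact this

lemma auxg_mellin (k : ℝ) (w : ℂ) (h0 : 0 < w.re) (h1 : w.re < 1 / 2) :
    mellin (auxg k) w = (Real.cosh (Real.pi * k) : ℂ) / (√π : ℝ) *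
      (Complex.Gamma (w + I * k) * Complex.Gamma (w - I * k) * Complex.Gamma (1 / 2 - w)) := by
  unfold mellin auxg
  simp only [smul_eq_mul, ← integral_const_mul]
  rw [integral_integral_swap (aux_fubini k w h0 h1), ← aux_gamma_identity w k h0 h1]
  have hv : 0 < (1 - 2 * w).re := by simp; linarith
  have P := aux_beta (w + I * k) (1 - 2 * w) (by simpa using h0) hv
  have M := aux_beta (w - I * k) (1 - 2 * w) (by simpa using h0) hv
  rw [← P.2, ← M.2, ← integral_add P.1 M.1, ← integral_const_mul, ← integral_const_mul,
    ← integral_const_mul]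
  refine setIntegral_congr_fun measurableSet_Ioi fun t ht => ?_
  have hp : 0 < Real.sinh (t / 2) ^ 2 := by
    have : 0 < Real.sinh (t / 2) := Real.sinh_pos_iff.2 (half_pos ht)
    positivity
  have hG := integral_cpow_mul_exp_neg_mul_Ioi h0 hp
  have hc : (1 / ((Real.sinh (t / 2) ^ 2 : ℝ) : ℂ)) ^ w = ((Real.sinh (t / 2) ^ 2 : ℝ) : ℂ) ^ (-w) := by
    rw [one_div, inv_cpow _ _ (by rw [arg_ofReal_of_nonneg hp.le]; exact Real.pi_pos.ne), cpow_neg]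
  rw [hc, aux_sinh_cpow w t ht] at hG
  have : ∀ x : ℝ, (x : ℂ) ^ (w - 1) *
      ((Real.exp (-(Real.sinh (t / 2) ^ 2 * x)) * Real.cos (k * t) : ℝ) : ℂ) =
      (x : ℂ) ^ (w - 1) * Complex.exp (-(((Real.sinh (t / 2) ^ 2 : ℝ) : ℂ) * x)) *
        Complex.cos (k * t) := by
    intro x; push_cast; ring
  simp only [this]
  rw [integral_mul_const, hG, Complex.cos]
  have e1 : Complex.exp (-t * (w + I * k)) = Complex.exp (-t * w) * Complex.exp (-(k * t) * I) := by
    rw [← Complex.exp_add]; ring_nf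
  have e2 : Complex.exp (-t * (w - I * k)) = Complex.exp (-t * w) * Complex.exp (k * t * I) := by
    rw [← Complex.exp_add]; ring_nf
  rw [e1, e2]
  ring

lemma aux_norm_Gamma_le (s : ℂ) (hs : 0 < s.re) : ‖Complex.Gamma s‖ ≤ Real.Gamma s.re := by
  rw [Complex.Gamma_eq_integral hs, Real.Gamma_eq_integral hs, Complex.GammaIntegral]
  refine (norm_integral_le_integral_norm _).trans (le_of_eq ?_)
  refine setIntegral_congr_fun measurableSet_Ioi fun x hx => ?_
  rw [norm_mul, norm_cpow_eq_rpow_re_of_pos hx, Complex.norm_real,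
    Real.norm_of_nonneg (Real.exp_pos _).le, sub_re, one_re]

lemma aux_Gamma_continuous (σ : ℝ) (hσ : 0 < σ) (h : ℝ → ℂ) (hc : Continuous h)
    (hh : ∀ y, (h y).re = σ) : Continuous fun y => Complex.Gamma (h y) := by
  rw [continuous_iff_continuousAt]
  intro y
  refine ContinuousAt.comp (g := Complex.Gamma) ?_ hc.continuousAt
  refine (Complex.differentiableAt_Gamma _ fun m hm => ?_).continuousAt
  have := hh y
  rw [hm] at this
  simp at this
  have : (0:ℝ) ≤ m := Nat.cast_nonneg m
  linarith

lemma aux_Gamma_decay (σ : ℝ) (hσ : 0 < σ) (hσ' : σ < 1) (y : ℝ) :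
    ‖Complex.Gamma (σ + y * I)‖ ≤ Real.Gamma (σ + 2) / σ ^ 2 * (1 + y ^ 2)⁻¹ := by
  set s : ℂ := σ + y * I with hs
  have sre : s.re = σ := by simp [hs]
  have sim : s.im = y := by simp [hs]
  have s0 : s ≠ 0 := by intro h; rw [h] at sre; simp at sre; linarith
  have s1 : s + 1 ≠ 0 := by
    intro h; have := congrArg Complex.re h; simp [sre] at this; linarith
  have e : Complex.Gamma (s + 2) = (s + 1) * (s * Complex.Gamma s) := by
    rw [← Complex.Gamma_add_one s s0, ← Complex.Gamma_add_one _ s1]; ring_nf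
  have hle := aux_norm_Gamma_le (s + 2) (by simp [sre]; linarith)
  rw [e, norm_mul, norm_mul] at hle
  simp only [add_re, sre, re_ofNat] at hle
  have n0 : σ ^ 2 * (1 + y ^ 2) ≤ ‖s‖ ^ 2 := by
    rw [← Complex.normSq_eq_norm_sq, Complex.normSq_apply, sre, sim]
    nlinarith [sq_nonneg y, mul_nonneg (sq_nonneg y) (show (0:ℝ) ≤ 1 - σ ^ 2 by nlinarith)]
  have n1 : ‖s‖ ≤ ‖s + 1‖ := by
    rw [← sq_le_sq₀ (norm_nonneg _) (norm_nonneg _), ← Complex.normSq_eq_norm_sq,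
      ← Complex.normSq_eq_norm_sq, Complex.normSq_apply, Complex.normSq_apply]
    simp [sre, sim]; nlinarith
  have n2 : σ ^ 2 * (1 + y ^ 2) ≤ ‖s + 1‖ * ‖s‖ := by
    nlinarith [norm_nonneg s]
  rw [div_mul_eq_mul_div, ← div_eq_mul_inv, div_div, le_div_iff₀ (by positivity)]
  nlinarith [norm_nonneg (Complex.Gamma s)]

lemma auxg_vertical (k σ : ℝ) (h0 : 0 < σ) (h1 : σ < 1 / 2) :
    VerticalIntegrable (mellin (auxg k)) σ := by
  unfold VerticalIntegrable
  have : (fun y : ℝ => mellin (auxg k) (σ + y * I)) = fun y : ℝ =>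
      (Real.cosh (Real.pi * k) : ℂ) / (√π : ℝ) *
      (Complex.Gamma (σ + y * I + I * k) * Complex.Gamma (σ + y * I - I * k) *
        Complex.Gamma (1 / 2 - (σ + y * I))) := by
    ext y
    exact auxg_mellin k _ (by simpa using h0) (by simpa using h1)
  rw [this]
  apply Integrable.const_mul
  have c1 : Continuous fun y : ℝ => Complex.Gamma (σ + y * I + I * k) :=
    aux_Gamma_continuous σ h0 _ (by fun_prop) (by intro y; simp)
  have c2 : Continuous fun y : ℝ => Complex.Gamma (σ + y * I - I * k) :=
    aux_Gamma_continuous σ h0 _ (by fun_prop) (by intro y; simp)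
  have c3 : Continuous fun y : ℝ => Complex.Gamma (1 / 2 - (σ + y * I)) :=
    aux_Gamma_continuous (1 / 2 - σ) (by linarith) _ (by fun_prop) (by intro y; simp)
  have B := (((integrable_inv_one_add_sq.comp_add_right k).const_mul
    (Real.Gamma (σ + 2) / σ ^ 2)).mul_const (Real.Gamma σ)).mul_const (Real.Gamma (1 / 2 - σ))
  refine B.mono' ((c1.mul c2).mul c3).aestronglyMeasurable
    (Filter.Eventually.of_forall fun y => ?_)
  rw [norm_mul, norm_mul]
  have b1 := aux_Gamma_decay σ h0 (by linarith) (y + k)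
  have b2 := aux_norm_Gamma_le (σ + y * I - I * k) (by simpa using h0)
  have b3 := aux_norm_Gamma_le (1 / 2 - (σ + y * I)) (by simp; linarith)
  have r2 : (σ + y * I - I * k : ℂ).re = σ := by simp
  have r3 : (1 / 2 - (σ + y * I) : ℂ).re = 1 / 2 - σ := by simp
  rw [r2] at b2
  rw [r3] at b3
  rw [show (σ + ((y + k : ℝ) : ℂ) * I : ℂ) = σ + y * I + I * k by push_cast; ring] at b1
  have g2 := (Real.Gamma_pos_of_pos (show 0 < σ + 2 by linarith)).le
  have g1 := (Real.Gamma_pos_of_pos h0).le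
  gcongr

/-- Mellin–Barnes representation of `z^{-1/2} K_{ik}(z²/2)`. The contour
from `-i∞ - 0` to `+i∞ - 0` is parametrised as `t = -ε + iu`, `u ∈ ℝ` (so `dt = i du`),
with `0 < ε < 1/2` so that it passes to the left of the poles of `Γ(-t)` and
`Γ(-2ik - t)` and to the right of those of `Γ(1/2 + ik + t)`. -/
theorem besselK_mellin_barnes (k z eps : ℝ) (hz : 0 < z)
    (heps : 0 < eps) (heps' : eps < 1 / 2) :
    ((z : ℂ) ^ (-(1 / 2 : ℂ)) * (besselKim k (z ^ 2 / 2) : ℂ))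
      = (Real.pi : ℂ) ^ (-(3 / 2 : ℂ)) * Complex.exp (-(z : ℂ) ^ 2 / 2) *
          (z : ℂ) ^ (2 * Complex.I * k - 1 / 2) *
          ((Real.cosh (Real.pi * k) : ℂ) / (2 * Complex.I)) *
          (Complex.I * ∫ u : ℝ,
            Complex.Gamma (1 / 2 + Complex.I * k + (-eps + Complex.I * u)) *
            Complex.Gamma (-(-eps + Complex.I * u)) *
            Complex.Gamma (-2 * Complex.I * k - (-eps + Complex.I * u)) *
            (z : ℂ) ^ (2 * (-eps + Complex.I * u))) := by
  have hz2 : 0 < z ^ 2 := by positivity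
  have hz0 : (z : ℂ) ≠ 0 := by exact_mod_cast hz.ne'
  have inv := mellinInv_mellin_eq eps (auxg k) hz2
    (auxg_mellinConvergent k eps (by simpa using heps) (by simpa using heps'))
    (auxg_vertical k eps heps heps') (auxg_continuousAt k _ hz2)
  rw [auxg_eq, mellinInv] at inv
  set J : ℂ := ∫ u : ℝ,
            Complex.Gamma (1 / 2 + Complex.I * k + (-eps + Complex.I * u)) *
            Complex.Gamma (-(-eps + Complex.I * u)) *
            Complex.Gamma (-2 * Complex.I * k - (-eps + Complex.I * u)) *
            (z : ℂ) ^ (2 * (-eps + Complex.I * u)) with hJ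
  have hint : ∫ y : ℝ, ((z ^ 2 : ℝ) : ℂ) ^ (-(eps + y * I : ℂ)) • mellin (auxg k) (eps + y * I) =
      (Real.cosh (Real.pi * k) : ℂ) / (√π : ℝ) * (z : ℂ) ^ (2 * I * k) * J := by
    rw [← integral_sub_left_eq_self _ volume (-k), hJ, ← integral_const_mul]
    congr 1
    ext u
    rw [auxg_mellin k _ (by simpa using heps) (by simpa using heps')]
    have hp : ((z ^ 2 : ℝ) : ℂ) ^ (-(eps + ((-k - u : ℝ) : ℂ) * I : ℂ)) =
        (z : ℂ) ^ (2 * I * k) * (z : ℂ) ^ (2 * (-eps + I * u)) := by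
      rw [← cpow_add _ _ hz0, cpow_def_of_ne_zero hz0,
        cpow_def_of_ne_zero (by exact_mod_cast hz2.ne'), ← Complex.ofReal_log hz2.le,
        ← Complex.ofReal_log hz.le, Real.log_pow]
      congr 1
      push_cast; ring
    rw [hp, smul_eq_mul]
    have g1 : (eps + ((-k - u : ℝ) : ℂ) * I + I * k : ℂ) = -(-eps + I * u) := by push_cast; ring
    have g2 : (eps + ((-k - u : ℝ) : ℂ) * I - I * k : ℂ) = -2 * I * k - (-eps + I * u) := by
      push_cast; ring
    have g3 : (1 / 2 - (eps + ((-k - u : ℝ) : ℂ) * I) : ℂ) = 1 / 2 + I * k + (-eps + I * u) := by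
      push_cast; ring
    rw [g1, g2, g3]
    ring
  rw [hint] at inv
  have hpi : (π : ℂ) ^ (-(3 / 2 : ℂ)) = 1 / (π * (√π : ℝ)) := by
    have : (-(3 / 2 : ℂ)) = ((-(3/2) : ℝ) : ℂ) := by push_cast; ring
    rw [this, ← Complex.ofReal_cpow Real.pi_pos.le, Real.rpow_neg Real.pi_pos.le,
      show (3/2 : ℝ) = 1 + 1/2 by norm_num, Real.rpow_add Real.pi_pos, Real.rpow_one,
      ← Real.sqrt_eq_rpow]
    push_cast; rw [one_div]
  have hexp : Complex.exp (-(z : ℂ) ^ 2 / 2) * (Real.exp (z ^ 2 / 2) : ℂ) = 1 := by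
    push_cast
    rw [← Complex.exp_add, ← Complex.exp_zero]; congr 1; ring
  have hzz : (z : ℂ) ^ (2 * I * k - 1 / 2) = (z : ℂ) ^ (2 * I * k) * (z : ℂ) ^ (-(1 / 2 : ℂ)) := by
    rw [← cpow_add _ _ hz0]; ring_nf
  have hK : (besselKim k (z ^ 2 / 2) : ℂ) = Complex.exp (-(z : ℂ) ^ 2 / 2) *
      ((Real.exp (z ^ 2 / 2) * besselKim k (z ^ 2 / 2) : ℝ) : ℂ) := by
    rw [ofReal_mul, ← mul_assoc, hexp, one_mul]
  have hs : ((√π : ℝ) : ℂ) ≠ 0 := by exact_mod_cast (Real.sqrt_pos.2 Real.pi_pos).ne'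
  have hpi0 : (π : ℂ) ≠ 0 := by exact_mod_cast Real.pi_ne_zero
  rw [hK, ← inv, hzz, hpi, real_smul]
  push_cast
  field_simp
end
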